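/- For every natural number n that is either 0 or even with n ≥ 4, and every z ∈ ℂ, Ĥ_n(z) = M₂(n)·μ_n(z), where M₂(n) = (−1)^{(n+2)/2}·n!·2^{n/2} / (n·(n−1)(n−2)·∏_{j=1}^{(n−4)/2}(n − 2(1+j))) for n ≥ 4 and M₂(0) = 1. -/

import Mathlib

/-- Physicists' Hermite polynomials via the Rodrigues formula (complex version). -/
noncomputable def Hc (n : ℕ) (z : ℂ) : ℂ :=
  (-1) ^ n * Complex.exp (z ^ 2) * iteratedDeriv n (fun t => Complex.exp (-t ^ 2)) z

/-- The function Ĥₙ. -/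
noncomputable def Hhatc (n : ℕ) (z : ℂ) : ℂ :=
  Hc n z + 4 * (n : ℂ) * Hc (n - 2) z + 4 * (n : ℂ) * ((n : ℂ) - 3) * Hc (n - 4) z

/-- Even coefficients c_{2k}(n) of the generalized power series. -/
noncomputable def ceven (n k : ℕ) : ℂ :=
  if k = 0 then 1
  else if k = 1 then -(n : ℂ)
  else (-1) ^ k * 2 ^ k * (n : ℂ) * ((n : ℂ) - ((2 * (k : ℂ) - 1) ^ 2 + 1)) *
    (∏ j ∈ Finset.Icc 1 (k - 2), ((n : ℂ) - 2 * (1 + (j : ℂ)))) /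
      (Nat.factorial (2 * k) : ℂ)

/-- Odd coefficients: `codd n k` is c_{2k-1}(n), for k ≥ 1. -/
noncomputable def codd (n k : ℕ) : ℂ :=
  if k ≤ 1 then 1
  else (-1) ^ (k + 1) * 2 ^ (k - 1) * ((n : ℂ) - ((2 * ((k : ℂ) - 1)) ^ 2 + 1)) *
    (∏ j ∈ Finset.Icc 1 (k - 2), ((n : ℂ) - (2 * (1 + (j : ℂ)) - 1))) /
      (Nat.factorial (2 * k - 1) : ℂ)

/-- μₙ(z) = Σ_{k≥0} c_{2k}(n)·z^{2k}. -/
noncomputable def muF (n : ℕ) (z : ℂ) : ℂ := ∑' k : ℕ, ceven n k * z ^ (2 * k)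

/-- νₙ(z) = Σ_{k≥1} c_{2k-1}(n)·z^{2k-1}. -/
noncomputable def nuF (n : ℕ) (z : ℂ) : ℂ := ∑' k : ℕ, codd n (k + 1) * z ^ (2 * k + 1)

/-- βₙ = μₙ + νₙ. -/
noncomputable def betaF (n : ℕ) (z : ℂ) : ℂ := muF n z + nuF n z

/-- The proportionality constant M₂(n). -/
noncomputable def M2 (n : ℕ) : ℂ :=
  if n = 0 then 1
  else (-1) ^ ((n + 2) / 2) * (Nat.factorial n : ℂ) * 2 ^ (n / 2) /
    ((n : ℂ) * ((n : ℂ) - 1) * ((n : ℂ) - 2) *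
      ∏ j ∈ Finset.Icc 1 ((n - 4) / 2), ((n : ℂ) - 2 * (1 + (j : ℂ))))

noncomputable def PH : ℕ → Polynomial ℂ
  | 0 => 1
  | n + 1 => Polynomial.C 2 * Polynomial.X * PH n - Polynomial.derivative (PH n)

lemma iter_PH (n : ℕ) : iteratedDeriv n (fun t : ℂ => Complex.exp (-t ^ 2)) =
    fun z => (-1) ^ n * (PH n).eval z * Complex.exp (-z ^ 2) := by
  induction n with
  | zero => funext z; simp [PH]
  | succ n ih =>
    rw [iteratedDeriv_succ, ih]
    funext z
    have h1 : HasDerivAt (fun z : ℂ => Complex.exp (-z ^ 2))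
        (Complex.exp (-z ^ 2) * (-(2 * z))) z := by
      have := ((hasDerivAt_pow 2 z).neg).cexp
      simpa using this
    have h2 := (((PH n).hasDerivAt z).const_mul ((-1 : ℂ) ^ n)).mul h1
    have h3 := h2.deriv
    refine Eq.trans h3 ?_
    simp only [PH, Polynomial.eval_sub, Polynomial.eval_mul, Polynomial.eval_C, Polynomial.eval_X]
    ring

lemma Hc_eq (n : ℕ) (z : ℂ) : Hc n z = (PH n).eval z := by
  unfold Hc
  rw [iter_PH]
  have h : Complex.exp (z ^ 2) * Complex.exp (-z ^ 2) = 1 := by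
    rw [← Complex.exp_add]; simp
  have h' : ((-1 : ℂ) ^ n) * (-1) ^ n = 1 := by
    rw [← mul_pow]; simp
  calc _ = ((-1 : ℂ) ^ n * (-1) ^ n) * (Complex.exp (z ^ 2) * Complex.exp (-z ^ 2)) *
        (PH n).eval z := by ring
    _ = _ := by rw [h, h']; ring

lemma PH_succ_zero (n : ℕ) : (PH (n + 1)).coeff 0 = - (PH n).coeff 1 := by
  simp [PH, mul_assoc, Polynomial.coeff_derivative]

lemma PH_succ_succ (n k : ℕ) : (PH (n + 1)).coeff (k + 1) =
    2 * (PH n).coeff k - (k + 2) * (PH n).coeff (k + 2) := by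
  simp [PH, mul_assoc, Polynomial.coeff_derivative]
  ring

lemma PH_lt (n : ℕ) : ∀ k, n < k → (PH n).coeff k = 0 := by
  induction n with
  | zero => intro k hk; simp [PH, Polynomial.coeff_one]; omega
  | succ n ih =>
    intro k hk
    obtain ⟨k, rfl⟩ : ∃ j, k = j + 1 := ⟨k - 1, by omega⟩
    rw [PH_succ_succ, ih _ (by omega), ih _ (by omega)]; simp

lemma PH_odd (n : ℕ) : ∀ k, (n + k) % 2 = 1 → (PH n).coeff k = 0 := by
  induction n with
  | zero => intro k hk; simp [PH, Polynomial.coeff_one]; omega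
  | succ n ih =>
    intro k hk
    rcases k with _ | k
    · rw [PH_succ_zero, ih _ (by omega)]; simp
    · rw [PH_succ_succ, ih _ (by omega), ih _ (by omega)]; simp

lemma PH_coeff (n : ℕ) : ∀ k l, n = k + 2 * l →
    (PH n).coeff k = (-1) ^ l * 2 ^ k * (n.factorial : ℂ) / (k.factorial * l.factorial) := by
  induction n with
  | zero =>
    intro k l h
    obtain rfl : k = 0 := by omega
    obtain rfl : l = 0 := by omega
    simp [PH]
  | succ n ih =>
    intro k l h
    have hf : ∀ j : ℕ, (j.factorial : ℂ) ≠ 0 := fun j => by exact_mod_cast j.factorial_ne_zero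
    have hs : ∀ j : ℕ, (j : ℂ) + 1 ≠ 0 := fun j => by exact_mod_cast j.succ_ne_zero
    rcases k with _ | k
    · obtain ⟨l, rfl⟩ : ∃ j, l = j + 1 := ⟨l - 1, by omega⟩
      rw [PH_succ_zero, ih 1 l (by omega)]
      have hn : (n : ℂ) = 1 + 2 * l := by
        have : n = 1 + 2 * l := by omega
        exact_mod_cast this
      have := hf l
      have := hs l
      simp only [Nat.factorial_succ, Nat.factorial_zero]
      push_cast
      rw [hn]
      field_simp
      ring
    · rcases l with _ | l
      · rw [PH_succ_succ, ih k 0 (by omega), PH_lt n _ (by omega)]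
        obtain rfl : n = k := by omega
        have := hf n
        have := hs n
        simp only [Nat.factorial_succ, Nat.factorial_zero]
        push_cast
        field_simp
        ring
      · rw [PH_succ_succ, ih k (l + 1) (by omega), ih (k + 2) l (by omega)]
        have hn : (n : ℂ) = k + 2 * (l + 1) := by
          have : n = k + 2 * (l + 1) := by omega
          exact_mod_cast this
        have := hf l
        have := hs l
        have := hf k
        have := hs k
        have h2 := hs (k + 1)
        push_cast at h2
        simp only [Nat.factorial_succ]
        push_cast
        rw [hn]
        field_simp
        ring

lemma PH_step (m k : ℕ) : ((k : ℂ) - (m + 1)) * (PH (2 * (m + 1))).coeff (2 * k) =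
    (2 * m + 2) * (2 * m + 1) * (PH (2 * m)).coeff (2 * k) := by
  rcases lt_trichotomy k (m + 1) with h | h | h
  · obtain ⟨l, rfl⟩ : ∃ l, m = k + l := ⟨m - k, by omega⟩
    rw [PH_coeff _ (2 * k) (l + 1) (by ring), PH_coeff _ (2 * k) l (by ring)]
    have hf : ∀ j : ℕ, (j.factorial : ℂ) ≠ 0 := fun j => by exact_mod_cast j.factorial_ne_zero
    have := hf l
    have := hf (2 * k)
    have h2 : (l : ℂ) + 1 ≠ 0 := by exact_mod_cast l.succ_ne_zero
    rw [show 2 * (k + l + 1) = 2 * (k + l) + 1 + 1 by ring]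
    simp only [Nat.factorial_succ]
    push_cast
    field_simp
    ring
  · rw [PH_lt (2 * m) _ (by omega), h]; push_cast; ring
  · rw [PH_lt (2 * m) _ (by omega), PH_lt _ _ (by omega)]; ring

lemma sum_even_odd (f : ℕ → ℂ) (N : ℕ) : ∑ i ∈ Finset.range (2 * N), f i =
    ∑ k ∈ Finset.range N, (f (2 * k) + f (2 * k + 1)) := by
  induction N with
  | zero => simp
  | succ N ih =>
    rw [show 2 * (N + 1) = 2 * N + 1 + 1 by ring, Finset.sum_range_succ, Finset.sum_range_succ,
      Finset.sum_range_succ, ih]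
    ring

lemma Hc_even (m N : ℕ) (h : m < N) (z : ℂ) : Hc (2 * m) z =
    ∑ k ∈ Finset.range N, (PH (2 * m)).coeff (2 * k) * z ^ (2 * k) := by
  rw [Hc_eq, Polynomial.eval_eq_sum_range' (n := 2 * N), sum_even_odd]
  · apply Finset.sum_congr rfl
    intro k _
    rw [PH_odd _ (2 * k + 1) (by omega)]; ring
  · have : (PH (2 * m)).natDegree ≤ 2 * m := Polynomial.natDegree_le_iff_coeff_eq_zero.2 (PH_lt _)
    omega

lemma prod_desc (m : ℕ) : ∀ r s : ℕ, m = r + s →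
    (∏ j ∈ Finset.Icc 1 r, (2 * ((m : ℂ) + 2) - 2 * (1 + (j : ℂ)))) * s.factorial =
      2 ^ r * m.factorial := by
  intro r
  induction r with
  | zero => intro s h; subst h; simp
  | succ r ih =>
    intro s h
    rw [Finset.prod_Icc_succ_top (by omega), pow_succ]
    have := ih (s + 1) (by omega)
    rw [Nat.factorial_succ] at this
    push_cast at this
    have hm : (m : ℂ) = r + 1 + s := by exact_mod_cast h
    push_cast
    linear_combination 2 * this + 2 * (∏ j ∈ Finset.Icc 1 r, (2 * ((m : ℂ) + 2) - 2 * (1 + (j : ℂ)))) * s.factorial * hm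

lemma ceven_eq (k l p : ℕ) (h : p + 2 = k + l) : ceven (2 * (p + 2)) k =
    (-1) ^ k * 4 ^ k * ((p : ℂ) + 2) * ((p : ℂ) + 1 + 2 * k - 2 * k ^ 2) * p.factorial /
      (l.factorial * (2 * k).factorial) := by
  have hf : ∀ j : ℕ, (j.factorial : ℂ) ≠ 0 := fun j => by exact_mod_cast j.factorial_ne_zero
  have hs : ∀ j : ℕ, (j : ℂ) + 1 ≠ 0 := fun j => by exact_mod_cast j.succ_ne_zero
  have h0 := hf p
  have h1 := hs p
  have h2 := hs (p + 1)
  push_cast at h2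
  have h2' : (p : ℂ) + 2 ≠ 0 := by convert h2 using 1; ring
  rcases k with _ | _ | k
  · obtain rfl : l = p + 1 + 1 := by omega
    simp only [ceven, Nat.factorial_succ]
    push_cast
    simp
    field_simp
    try ring
  · obtain rfl : l = p + 1 := by omega
    simp only [ceven, Nat.factorial_succ]
    push_cast
    simp [Nat.factorial]
    field_simp
    try ring
  · have hp := prod_desc p k l (by omega)
    have h3 := hf l
    have h4 := hf (2 * (k + 2))
    simp only [ceven]
    rw [if_neg (by omega), if_neg (by omega)]
    simp only [show k + 1 + 1 - 2 = k by omega, show k + 1 + 1 = k + 2 by omega]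
    push_cast
    have hp' := eq_div_of_mul_eq h3 hp
    rw [hp', show (4 : ℂ) = 2 * 2 by norm_num, mul_pow]
    field_simp
    ring

lemma ceven_gt (k p : ℕ) (h : p + 2 < k) : ceven (2 * (p + 2)) k = 0 := by
  simp only [ceven]
  rw [if_neg (by omega), if_neg (by omega), Finset.prod_eq_zero (i := p + 1)]
  · simp
  · simp; omega
  · push_cast; ring

lemma M2_eq (p : ℕ) : M2 (2 * (p + 2)) =
    (-1) ^ (p + 3) * ((2 * (p + 2)).factorial : ℂ) / (((p : ℂ) + 2) * (2 * p + 3) * (p + 1) * p.factorial) := by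
  have hf : ∀ j : ℕ, (j.factorial : ℂ) ≠ 0 := fun j => by exact_mod_cast j.factorial_ne_zero
  have h0 := hf p
  have h1 : (p : ℂ) + 1 ≠ 0 := by exact_mod_cast p.succ_ne_zero
  have h2 : (p : ℂ) + 2 ≠ 0 := by exact_mod_cast (p + 1).succ_ne_zero
  have h3 : 2 * (p : ℂ) + 3 ≠ 0 := by exact_mod_cast (2 * p + 2).succ_ne_zero
  have hp := prod_desc p p 0 (by omega)
  simp only [M2]
  rw [if_neg (by omega), show (2 * (p + 2) + 2) / 2 = p + 3 by omega,
    show 2 * (p + 2) / 2 = p + 2 by omega, show (2 * (p + 2) - 4) / 2 = p by omega]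
  push_cast at hp ⊢
  rw [Nat.factorial_zero, Nat.cast_one, mul_one] at hp
  rw [hp, show (2 * ((p : ℂ) + 2) - 1) = 2 * p + 3 by ring,
    show (2 * ((p : ℂ) + 2) - 2) = 2 * (p + 1) by ring]
  field_simp
  ring

lemma key (k p : ℕ) (hk : k ≤ p + 2) :
    (PH (2 * (p + 2))).coeff (2 * k) + 4 * (2 * ((p : ℂ) + 2)) * (PH (2 * (p + 1))).coeff (2 * k)
      + 4 * (2 * ((p : ℂ) + 2)) * (2 * ((p : ℂ) + 2) - 3) * (PH (2 * p)).coeff (2 * k)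
    = M2 (2 * (p + 2)) * ceven (2 * (p + 2)) k := by
  have hf : ∀ j : ℕ, (j.factorial : ℂ) ≠ 0 := fun j => by exact_mod_cast j.factorial_ne_zero
  have h0 := hf p
  have h1 : (p : ℂ) + 1 ≠ 0 := by exact_mod_cast p.succ_ne_zero
  have h2 : (p : ℂ) + 2 ≠ 0 := by exact_mod_cast (p + 1).succ_ne_zero
  have h3 : 2 * (p : ℂ) + 3 ≠ 0 := by exact_mod_cast (2 * p + 2).succ_ne_zero
  have h4 : 2 * (p : ℂ) + 1 ≠ 0 := by exact_mod_cast (2 * p).succ_ne_zero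
  have s1 := PH_step (p + 1) k
  have s2 := PH_step p k
  obtain ⟨l, hl⟩ : ∃ l, p + 2 = k + l := ⟨p + 2 - k, by omega⟩
  rw [M2_eq, ceven_eq k l p hl]
  have e := PH_coeff (2 * (p + 2)) (2 * k) l (by omega)
  have h5 := hf l
  have h6 := hf (2 * k)
  set A := (PH (2 * (p + 2))).coeff (2 * k)
  have s1' : (PH (2 * (p + 1))).coeff (2 * k) =
      ((k : ℂ) - (p + 2)) * A / ((2 * (p + 2)) * (2 * p + 3)) := by
    rw [eq_div_iff (mul_ne_zero (mul_ne_zero two_ne_zero h2) h3)]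
    push_cast at s1
    linear_combination -s1
  have s2' : (PH (2 * p)).coeff (2 * k) =
      ((k : ℂ) - (p + 1)) * (PH (2 * (p + 1))).coeff (2 * k) / ((2 * (p + 1)) * (2 * p + 1)) := by
    rw [eq_div_iff (mul_ne_zero (mul_ne_zero two_ne_zero h1) h4)]
    linear_combination -s2
  have hsg : (-1 : ℂ) ^ (p + 3) * (-1) ^ k = - (-1) ^ l := by
    rw [show p + 3 = k + l + 1 by omega, ← pow_add, show k + l + 1 + k = 2 * k + (l + 1) by ring,
      pow_add, pow_mul]
    simp [pow_succ]
  have e2 : (-1) ^ (p + 3) * ((2 * (p + 2)).factorial : ℂ) /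
      (((p : ℂ) + 2) * (2 * p + 3) * (p + 1) * p.factorial) *
      ((-1) ^ k * 4 ^ k * ((p : ℂ) + 2) * ((p : ℂ) + 1 + 2 * k - 2 * k ^ 2) * p.factorial /
      (l.factorial * (2 * k).factorial)) =
      - A * ((p : ℂ) + 1 + 2 * k - 2 * k ^ 2) / ((2 * p + 3) * (p + 1)) := by
    rw [e, pow_mul, show (2 : ℂ) ^ 2 = 4 by norm_num,
      show (-1 : ℂ) ^ l = -((-1) ^ (p + 3) * (-1) ^ k) by rw [hsg, neg_neg]]
    generalize (-1 : ℂ) ^ (p + 3) = u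
    generalize (-1 : ℂ) ^ k = v
    field_simp
    try ring
  rw [e2, s2', s1']
  field_simp
  ring

theorem stmt13 (n : ℕ) (hn : n = 0 ∨ (Even n ∧ 4 ≤ n)) (z : ℂ) :
    Hhatc n z = M2 n * muF n z := by
  rcases hn with rfl | ⟨he, h4⟩
  · have h : ∀ k, k ∉ Finset.range 1 → ceven 0 k * z ^ (2 * k) = 0 := by
      intro k hk
      simp at hk
      by_cases h1 : k = 1 <;> simp [ceven, hk, h1]
    unfold muF
    rw [tsum_eq_sum h]
    simp [Hhatc, M2, ceven, Hc_eq, PH]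
  · obtain ⟨p, rfl⟩ : ∃ p, n = 2 * (p + 2) := by
      obtain ⟨r, hr⟩ := he
      exact ⟨r - 2, by omega⟩
    have h : ∀ k, k ∉ Finset.range (p + 3) → ceven (2 * (p + 2)) k * z ^ (2 * k) = 0 := by
      intro k hk
      simp at hk
      rw [ceven_gt k p (by omega), zero_mul]
    unfold muF Hhatc
    rw [tsum_eq_sum h, show 2 * (p + 2) - 2 = 2 * (p + 1) by omega,
      show 2 * (p + 2) - 4 = 2 * p by omega, Hc_even (p + 2) (p + 3) (by omega),
      Hc_even (p + 1) (p + 3) (by omega), Hc_even p (p + 3) (by omega), Finset.mul_sum,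
      Finset.mul_sum, Finset.mul_sum, ← Finset.sum_add_distrib, ← Finset.sum_add_distrib]
    apply Finset.sum_congr rfl
    intro k hk
    have hk' := key k p (by simp at hk; omega)
    push_cast
    linear_combination z ^ (2 * k) * hk'
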